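/- arXiv:math/0201083 — 2 statements merged into one kernel-verified Lean document; each statement's English description precedes it below -/
import Mathlib

section
/- For elements a, b of the free commutative monoid [X] (identified with finitely supported functions ℕ⁺ → ℕ), one has a ≤_𝔠 b if and only if for every j ≥ 1 the tail sums satisfy Σ_{i ≥ j} a_i ≤ Σ_{i ≥ j} b_i. Consequently, the map a ↦ (Σ_{i≥j} a_i)_{j≥1} is an order isomorphism from ([X], 𝔠) onto the set of non-increasing finitely supported sequences of natural numbers with the componentwise order (the Young lattice of integer partitions). -/
/-- A standard term order on the free monoid `X*` on the countable alphabet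
`X = {x₁, x₂, …}`, whose words we represent as lists of positive integers
(the word `x_{i₁} ⋯ x_{i_d}` is the list `[i₁, …, i_d]`).  It is a strict
total order such that the empty word `1` is smallest, which is compatible
with two-sided multiplication (concatenation), and with `x₁ < x₂ < ⋯`. -/
structure StdTermOrder where
  lt : List ℕ+ → List ℕ+ → Prop
  irrefl : ∀ a, ¬ lt a a
  trans : ∀ a b c, lt a b → lt b c → lt a c
  total : ∀ a b, a ≠ b → lt a b ∨ lt b a
  one_lt : ∀ t, t ≠ [] → lt [] t
  mul_lt : ∀ a b s t, lt s t → lt (a ++ s ++ b) (a ++ t ++ b)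
  std : ∀ i j : ℕ+, i < j → lt [i] [j]

/-- The partial order `𝔑`, the intersection of all standard term orders:
`m ≤_𝔑 m'` iff `m ≤ m'` holds for every standard term order on `X*`. -/
def Nle (m m' : List ℕ+) : Prop := ∀ T : StdTermOrder, m = m' ∨ T.lt m m'

/-- The strict version of `𝔑`. -/
def Nlt (m m' : List ℕ+) : Prop := Nle m m' ∧ m ≠ m'

/-- `m'` covers `m` in the partial order `𝔑`. -/
def NCovers (m m' : List ℕ+) : Prop :=
  Nlt m m' ∧ ∀ k, Nlt m k → ¬ Nlt k m'

/-- A standard term order on the free abelian monoid `[X]`, whose elements we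
represent as finitely supported functions `ℕ+ →₀ ℕ` (exponent vectors): a
strict total order with `1` (i.e. `0`) smallest, compatible with
multiplication (addition of exponent vectors), and with `x₁ < x₂ < ⋯`. -/
structure CStdTermOrder where
  lt : (ℕ+ →₀ ℕ) → (ℕ+ →₀ ℕ) → Prop
  irrefl : ∀ a, ¬ lt a a
  trans : ∀ a b c, lt a b → lt b c → lt a c
  total : ∀ a b, a ≠ b → lt a b ∨ lt b a
  one_lt : ∀ t, t ≠ 0 → lt 0 t
  mul_lt : ∀ t s s', lt s s' → lt (t + s) (t + s')
  std : ∀ i j : ℕ+, i < j → lt (Finsupp.single i 1) (Finsupp.single j 1)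

/-- The partial order `𝔠` on `[X]`, the intersection of all standard term
orders on `[X]`. -/
def Cle (a b : ℕ+ →₀ ℕ) : Prop := ∀ T : CStdTermOrder, a = b ∨ T.lt a b

/-- The tail sum `Σ_{i ≥ j} a_i` of an exponent vector. -/
def tailSum (a : ℕ+ →₀ ℕ) (j : ℕ+) : ℕ :=
  ∑ i ∈ a.support.filter (fun i => j ≤ i), a i

/-!
If the tail sums of `a` are dominated by those of `b`, let `d ≥ 0` be their difference and let `s`
be the substitution `x₁ ↦ 1`, `x_{j+1} ↦ x_j`. Since `a_j` is the difference of consecutive tail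
sums of `a`, and likewise for `b`, we get `b + s d = a + d`. In every standard term order `s d ≤ d`,
because `s` does not increase any variable, so cancellation gives `a ≤ b`. Conversely, comparing the
`j`-th tail sums first and breaking ties colexicographically is a standard term order, so
`a ≤_𝔠 b` bounds the `j`-th tail sums.
-/

section Cle

variable {a b c d : ℕ+ →₀ ℕ}

theorem Cle.refl (a : ℕ+ →₀ ℕ) : Cle a a := fun _ => Or.inl rfl

theorem Cle.trans (hab : Cle a b) (hbc : Cle b c) : Cle a c := by
  intro T
  rcases hab T with rfl | hab'
  · exact hbc T
  rcases hbc T with rfl | hbc'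
  · exact Or.inr hab'
  · exact Or.inr (T.trans _ _ _ hab' hbc')

theorem Cle.add_left (h : Cle a b) (c : ℕ+ →₀ ℕ) : Cle (c + a) (c + b) :=
  fun T => (h T).imp (congrArg (c + ·)) (T.mul_lt c a b)

theorem Cle.add (hab : Cle a b) (hcd : Cle c d) : Cle (a + c) (b + d) := by
  have hbc : Cle (a + c) (b + c) := by simpa only [add_comm c] using hab.add_left c
  exact hbc.trans (hcd.add_left b)

theorem Cle.nsmul (h : Cle a b) (n : ℕ) : Cle (n • a) (n • b) := by
  induction n with
  | zero => simpa only [zero_nsmul] using Cle.refl 0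
  | succ n ih => simpa only [succ_nsmul] using ih.add h

theorem Cle.of_add_left (h : Cle (c + a) (c + b)) : Cle a b := by
  intro T
  rcases h T with heq | hlt
  · exact Or.inl (add_left_cancel heq)
  refine or_iff_not_imp_left.2 fun hne => (T.total a b hne).resolve_right fun hba => ?_
  exact T.irrefl _ (T.trans _ _ _ hlt (T.mul_lt c b a hba))

theorem cle_zero_left (a : ℕ+ →₀ ℕ) : Cle 0 a :=
  fun T => or_iff_not_imp_left.2 fun h => T.one_lt a (Ne.symm h)

theorem cle_single_one_of_lt {i j : ℕ+} (h : i < j) :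
    Cle (Finsupp.single i 1) (Finsupp.single j 1) :=
  fun T => Or.inr (T.std i j h)

end Cle

theorem tailSum_eq_sum (a : ℕ+ →₀ ℕ) (j : ℕ+) :
    tailSum a j = a.sum fun i n => if j ≤ i then n else 0 :=
  Finset.sum_filter _ _

theorem tailSum_zero (j : ℕ+) : tailSum 0 j = 0 := rfl

theorem tailSum_add (a b : ℕ+ →₀ ℕ) (j : ℕ+) :
    tailSum (a + b) j = tailSum a j + tailSum b j := by
  simp only [tailSum_eq_sum]
  exact Finsupp.sum_add_index' (fun _ => ite_self 0) fun _ _ _ => by split_ifs <;> rfl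

theorem tailSum_single (i : ℕ+) (n : ℕ) (j : ℕ+) :
    tailSum (Finsupp.single i n) j = if j ≤ i then n else 0 := by
  rw [tailSum_eq_sum]
  exact Finsupp.sum_single_index (ite_self 0)

theorem tailSum_eq_add_tailSum_succ (a : ℕ+ →₀ ℕ) (j : ℕ+) :
    tailSum a j = a j + tailSum a (j + 1) := by
  induction a using Finsupp.induction_linear with
  | zero => simp only [tailSum_zero, Finsupp.zero_apply]
  | add f g hf hg => simp only [tailSum_add, Finsupp.add_apply, hf, hg]; ring
  | single i n =>
    simp only [tailSum_single, Finsupp.single_apply, PNat.add_one_le_iff]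
    rcases lt_trichotomy i j with h | rfl | h
    · simp [h.ne, h.not_ge, h.not_gt]
    · simp
    · simp [h.ne', h.le, h]

theorem tailSum_succ_le (a : ℕ+ →₀ ℕ) (j : ℕ+) : tailSum a (j + 1) ≤ tailSum a j :=
  (Nat.le_add_left _ _).trans_eq (tailSum_eq_add_tailSum_succ a j).symm

theorem finite_support_tailSum (a : ℕ+ →₀ ℕ) : (Function.support (tailSum a)).Finite := by
  refine (a.support.finite_toSet.biUnion fun i _ => Set.finite_Iic i).subset fun j hj => ?_
  obtain ⟨i, hi, -⟩ := Finset.exists_ne_zero_of_sum_ne_zero hj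
  rw [Finset.mem_filter] at hi
  exact Set.mem_biUnion hi.1 hi.2

/-- The sequence of tail sums, as a finitely supported function. When the exponent of `x_i` is read
as the multiplicity of the part `i` of a partition, this is the conjugate partition. -/
noncomputable def tailSums (a : ℕ+ →₀ ℕ) : ℕ+ →₀ ℕ :=
  Finsupp.ofSupportFinite (tailSum a) (finite_support_tailSum a)

/-- The substitution `x₁ ↦ 1`, `x_{j+1} ↦ x_j` on `[X]`, which expresses the recursion
`tailSum a j = a j + tailSum a (j + 1)` as an identity in `[X]`. -/
noncomputable def shift : (ℕ+ →₀ ℕ) →+ (ℕ+ →₀ ℕ) :=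
  Finsupp.comapDomain.addMonoidHom (add_left_injective (1 : ℕ+))

theorem shift_apply (a : ℕ+ →₀ ℕ) (j : ℕ+) : shift a j = a (j + 1) := rfl

theorem shift_single_one (n : ℕ) : shift (Finsupp.single 1 n) = 0 := by
  ext j
  rw [shift_apply, Finsupp.single_eq_of_ne (PNat.lt_add_left 1 j).ne', Finsupp.zero_apply]

theorem shift_single_succ (i : ℕ+) (n : ℕ) :
    shift (Finsupp.single (i + 1) n) = Finsupp.single i n := by
  ext j
  simp only [shift_apply, Finsupp.single_apply, add_left_inj]

theorem cle_shift (a : ℕ+ →₀ ℕ) : Cle (shift a) a := by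
  induction a using Finsupp.induction_linear with
  | zero => simpa only [map_zero] using Cle.refl 0
  | add f g hf hg => simpa only [map_add] using hf.add hg
  | single i n =>
    have hvar : Cle (shift (Finsupp.single i 1)) (Finsupp.single i 1) := by
      induction i using PNat.recOn with
      | one => simpa only [shift_single_one] using cle_zero_left _
      | succ i _ =>
        simpa only [shift_single_succ] using cle_single_one_of_lt (PNat.lt_add_right i 1)
    simpa only [← map_nsmul, Finsupp.smul_single_one] using hvar.nsmul n

theorem tailSum_shift (a : ℕ+ →₀ ℕ) (j : ℕ+) : tailSum (shift a) j = tailSum a (j + 1) := by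
  induction a using Finsupp.induction_linear with
  | zero => rw [map_zero, tailSum_zero, tailSum_zero]
  | add f g hf hg => rw [map_add, tailSum_add, tailSum_add, hf, hg]
  | single i n =>
    induction i using PNat.recOn with
    | one => simp [shift_single_one, tailSum_zero, tailSum_single, (PNat.lt_add_left 1 j).ne']
    | succ i _ => simp only [shift_single_succ, tailSum_single, add_le_add_iff_right]

theorem add_shift_tailSums (a : ℕ+ →₀ ℕ) : a + shift (tailSums a) = tailSums a := by
  ext j
  exact (tailSum_eq_add_tailSum_succ a j).symm

theorem tailSums_injective : Function.Injective tailSums := by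
  intro a b h
  have hb : b + shift (tailSums a) = tailSums a := by rw [h, add_shift_tailSums]
  exact add_right_cancel ((add_shift_tailSums a).trans hb.symm)

theorem tailSums_eq_of_add_shift_eq {a f : ℕ+ →₀ ℕ} (h : a + shift f = f) : tailSums a = f := by
  ext j
  have hsum : tailSum a j + tailSum f (j + 1) = f j + tailSum f (j + 1) := by
    rw [← tailSum_shift, ← tailSum_add, h, tailSum_shift, tailSum_eq_add_tailSum_succ]
  exact add_right_cancel hsum

theorem range_tailSum :
    Set.range tailSum = {f : ℕ+ → ℕ | (∀ j, f (j + 1) ≤ f j) ∧ {j | f j ≠ 0}.Finite} := by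
  ext f
  constructor
  · rintro ⟨a, rfl⟩
    exact ⟨tailSum_succ_le a, finite_support_tailSum a⟩
  · rintro ⟨hanti, hfin⟩
    let F : ℕ+ →₀ ℕ := Finsupp.ofSupportFinite f hfin
    have hF : F - shift F + shift F = F := tsub_add_cancel_of_le hanti
    exact ⟨F - shift F, congrArg DFunLike.coe (tailSums_eq_of_add_shift_eq hF)⟩

theorem cle_of_tailSum_le {a b : ℕ+ →₀ ℕ} (h : ∀ j, tailSum a j ≤ tailSum b j) : Cle a b := by
  obtain ⟨d, hd⟩ : ∃ d, tailSums b = tailSums a + d := exists_add_of_le h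
  have hadd : a + d = b + shift d := by
    apply add_right_cancel (b := shift (tailSums a))
    calc a + d + shift (tailSums a) = a + shift (tailSums a) + d := add_right_comm _ _ _
      _ = tailSums b := by rw [add_shift_tailSums, hd]
      _ = b + shift (tailSums a + d) := by rw [← hd, add_shift_tailSums]
      _ = b + shift d + shift (tailSums a) := by rw [map_add]; abel
  have hle : Cle (shift d + a) (shift d + b) := by
    rw [add_comm _ b, ← hadd, add_comm _ a]
    exact (cle_shift d).add_left a
  exact hle.of_add_left

/-- The standard term order obtained by pulling back the order of `M` along `φ`. -/
def CStdTermOrder.ofAddMonoidHom {M : Type*} [AddCommMonoid M] [LinearOrder M]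
    [IsOrderedCancelAddMonoid M] (φ : (ℕ+ →₀ ℕ) →+ M) (hinj : Function.Injective φ)
    (hnonneg : ∀ a, 0 ≤ φ a) (hvar : StrictMono fun i => φ (Finsupp.single i 1)) :
    CStdTermOrder where
  lt a b := φ a < φ b
  irrefl _ := lt_irrefl _
  trans _ _ _ := lt_trans
  total _ _ h := lt_or_gt_of_ne (hinj.ne h)
  one_lt t ht := by
    rw [map_zero]
    exact (hnonneg t).lt_of_ne' ((map_ne_zero_iff φ hinj).2 ht)
  mul_lt t s s' h := by simpa only [map_add, add_lt_add_iff_left] using h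
  std _ _ h := hvar h

/-- The exponent vector `a` paired with its `j`-th tail sum, which takes precedence; ties are broken
by the exponent of the largest variable in which two vectors differ. -/
noncomputable def tailSumColex (j : ℕ+) : (ℕ+ →₀ ℕ) →+ ℕ ×ₗ Colex (ℕ+ →₀ ℕ) where
  toFun a := toLex (tailSum a j, toColex a)
  map_zero' := rfl
  map_add' a b := by rw [tailSum_add]; rfl

theorem tailSumColex_injective (j : ℕ+) : Function.Injective (tailSumColex j) :=
  fun _ _ h => congrArg (fun p : ℕ ×ₗ Colex (ℕ+ →₀ ℕ) => ofColex (ofLex p).2) h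

theorem tailSumColex_nonneg (j : ℕ+) (a : ℕ+ →₀ ℕ) : 0 ≤ tailSumColex j a :=
  Prod.Lex.toLex_mono (a := 0) ⟨zero_le, zero_le⟩

theorem tailSumColex_single_strictMono (j : ℕ+) :
    StrictMono fun i => tailSumColex j (Finsupp.single i 1) := by
  intro i k hik
  have htail : tailSum (Finsupp.single i 1) j ≤ tailSum (Finsupp.single k 1) j := by
    simp only [tailSum_single]
    split_ifs with hi hk
    · exact le_rfl
    · exact absurd (hi.trans hik.le) hk
    all_goals exact Nat.zero_le _
  exact Prod.Lex.toLex_strictMono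
    (Prod.mk_lt_mk.2 (Or.inr ⟨htail, Finsupp.Colex.single_strictMono hik⟩))

/-- The standard term order comparing the `j`-th tail sums first. -/
noncomputable def tailOrder (j : ℕ+) : CStdTermOrder :=
  .ofAddMonoidHom (tailSumColex j) (tailSumColex_injective j) (tailSumColex_nonneg j)
    (tailSumColex_single_strictMono j)

theorem tailSum_le_of_tailOrder_lt {j : ℕ+} {a b : ℕ+ →₀ ℕ} (h : (tailOrder j).lt a b) :
    tailSum a j ≤ tailSum b j :=
  Prod.Lex.monotone_fst_ofLex (show tailSumColex j a < tailSumColex j b from h).le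

theorem Cle.tailSum_le {a b : ℕ+ →₀ ℕ} (h : Cle a b) (j : ℕ+) : tailSum a j ≤ tailSum b j := by
  rcases h (tailOrder j) with rfl | hlt
  · exact le_rfl
  · exact tailSum_le_of_tailOrder_lt hlt

/-- `a ≤_𝔠 b` iff all tail sums of `a` are dominated by those of `b`;
consequently `a ↦ (Σ_{i ≥ j} a_i)_j` is an order isomorphism from
`([X], 𝔠)` onto the non-increasing finitely supported sequences with the
componentwise order, i.e. onto the Young lattice. -/
theorem stmt13 :
    (∀ a b : ℕ+ →₀ ℕ, Cle a b ↔ ∀ j : ℕ+, tailSum a j ≤ tailSum b j) ∧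
    Function.Injective (fun (a : ℕ+ →₀ ℕ) (j : ℕ+) => tailSum a j) ∧
    Set.range (fun (a : ℕ+ →₀ ℕ) (j : ℕ+) => tailSum a j) =
      {f : ℕ+ → ℕ | (∀ j, f (j + 1) ≤ f j) ∧ {j | f j ≠ 0}.Finite} := by
  exact ⟨fun _ _ => ⟨Cle.tailSum_le, cle_of_tailSum_le⟩,
    fun _ _ h => tailSums_injective (DFunLike.coe_injective h), range_tailSum⟩
end

section
/- The pair (σ, σ⁺) is a Galois coconnection between (X*, Q) and ([X], 𝔠): σ and σ⁺ are both order-preserving, σ⁺(σ(m)) ≥_Q m for every word m ∈ X*, and σ(σ⁺(w)) ≤_𝔠 w (indeed σ(σ⁺(w)) = w) for every w ∈ [X]. -/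
/-- A sorted standard term order: a standard term order in which additionally
`t xᵢ x_j s > t x_j xᵢ s` whenever `i < j` (sorted words are larger). -/
structure SortedStdTermOrder extends StdTermOrder where
  sorted : ∀ (t s : List ℕ+) (i j : ℕ+), i < j →
    lt (t ++ j :: i :: s) (t ++ i :: j :: s)

/-- The partial order `Q`, the intersection of all sorted standard term
orders on `X*`. -/
def Qle (m m' : List ℕ+) : Prop := ∀ T : SortedStdTermOrder, m = m' ∨ T.lt m m'

/-- The abelianization map `σ : X* → [X]`, recording for each `i` the number
of occurrences of the letter `xᵢ`. -/
noncomputable def sigmaAb : List ℕ+ → (ℕ+ →₀ ℕ)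
  | [] => 0
  | a :: t => Finsupp.single a 1 + sigmaAb t

/-- The sorting map `σ⁺ : [X] → X*`, sending `x₁^{a₁} ⋯ x_ℓ^{a_ℓ}` to the
weakly increasing word `x₁^{a₁} ⋯ x_ℓ^{a_ℓ}`. -/
def sigmaPlus (f : ℕ+ →₀ ℕ) : List ℕ+ :=
  (f.support.sort (· ≤ ·)).foldr (fun a l => List.replicate (f a) a ++ l) []

/-! A word embeds into another when its letters can be matched, in order, with larger or equal
letters of the other; this forces `≤` in every standard term order. Sorted words `u`, `v` embed as
soon as `v` has, for every `k`, at least as many letters of index `≥ k` as `u`, and these numbers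
are monotone for `𝔠` because each of them is a weight which some standard term order on `[X]`
refines. So `σ⁺` is monotone. Conversely, every standard term order on `[X]` is induced by a sorted
one on `X*`, which compares abelianizations first and breaks ties by the reversed lexicographic
order, so `σ` is monotone. Finally `m ≤_Q σ⁺(σ(m))` because insertion sort only performs swaps that
a sorted term order regards as increasing. -/

section Lists

variable {α : Type*}

theorem sublistForall₂_of_countP_le [LinearOrder α] {u v : List α} (hu : u.SortedLE)
    (hv : v.SortedLE) (h : ∀ k, u.countP (k ≤ ·) ≤ v.countP (k ≤ ·)) :
    List.SublistForall₂ (· ≤ ·) u v := by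
  induction u using List.reverseRecOn generalizing v with
  | nil => exact .nil
  | append_singleton u x ih =>
    obtain ⟨hu', -, hux⟩ := List.pairwise_append.1 hu.pairwise
    replace hux : ∀ a ∈ u, a ≤ x := by simpa using hux
    obtain ⟨z, hz, hxz⟩ : ∃ z ∈ v, x ≤ z := by
      have hpos : 0 < v.countP (x ≤ ·) := lt_of_lt_of_le (by simp) (h x)
      simpa [List.countP_pos_iff] using hpos
    obtain rfl | ⟨v, y, rfl⟩ := v.eq_nil_or_concat'
    · simp at hz
    obtain ⟨hv', -, hvy⟩ := List.pairwise_append.1 hv.pairwise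
    replace hvy : ∀ a ∈ v ++ [y], a ≤ y := by simpa [or_imp, forall_and] using hvy
    have hxy : x ≤ y := hxz.trans (hvy z hz)
    have huv : ∀ k, u.countP (k ≤ ·) ≤ v.countP (k ≤ ·) := by
      intro k
      by_cases hk : k ≤ x
      · simpa [List.countP_append, hk, hk.trans hxy] using h k
      · have hzero : u.countP (k ≤ ·) = 0 := by
          simpa [List.countP_eq_zero] using fun a ha => (hux a ha).trans_lt (not_le.1 hk)
        simp [hzero]
    obtain ⟨t, hut, htv⟩ := List.sublistForall₂_iff.1 (ih hu'.sortedLE hv'.sortedLE huv)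
    exact List.sublistForall₂_iff.2
      ⟨t ++ [y], List.rel_append hut (.cons hxy .nil), htv.append (.refl _)⟩

theorem append_lt_append_of_length_eq [LT α] {s t : List α} (u : List α)
    (hlen : s.length = t.length) (h : s < t) : s ++ u < t ++ u := by
  induction s generalizing t with
  | nil =>
    obtain rfl : t = [] := List.length_eq_zero_iff.1 hlen.symm
    exact absurd h (List.not_lt_nil _)
  | cons a s ih =>
    cases t with
    | nil => simp at hlen
    | cons b t =>
      simp only [List.cons_append, List.cons_lt_cons_iff] at h ⊢
      exact h.imp_right fun h => ⟨h.1, ih (by simpa using hlen) h.2⟩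

end Lists

theorem sigmaAb_eq_toFinsupp (m : List ℕ+) : sigmaAb m = Multiset.toFinsupp (m : Multiset ℕ+) := by
  induction m with
  | nil => simp [sigmaAb]
  | cons a m ih => rw [sigmaAb, ih, ← Multiset.cons_coe, ← Multiset.singleton_add, map_add,
      Multiset.toFinsupp_singleton]

theorem sigmaAb_eq_iff_perm {s t : List ℕ+} : sigmaAb s = sigmaAb t ↔ s.Perm t := by
  simp only [sigmaAb_eq_toFinsupp, EmbeddingLike.apply_eq_iff_eq, Multiset.coe_eq_coe]

theorem sigmaAb_append (s t : List ℕ+) : sigmaAb (s ++ t) = sigmaAb s + sigmaAb t := by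
  simp only [sigmaAb_eq_toFinsupp, ← Multiset.coe_add, map_add]

theorem weight_sigmaAb {M : Type*} [AddCommMonoid M] (w : ℕ+ → M) (m : List ℕ+) :
    Finsupp.weight w (sigmaAb m) = (m.map w).sum := by
  induction m with
  | nil => simp [sigmaAb]
  | cons a m ih => simp [sigmaAb, Finsupp.weight_single, ih]

theorem sigmaPlus_eq_flatMap (f : ℕ+ →₀ ℕ) :
    sigmaPlus f = f.support.sort.flatMap fun a => List.replicate (f a) a := by
  rw [sigmaPlus, List.foldr_append_eq_append, List.append_nil, List.flatMap_def]

theorem sortedLE_sigmaPlus (f : ℕ+ →₀ ℕ) : (sigmaPlus f).SortedLE := by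
  rw [sigmaPlus_eq_flatMap, List.sortedLE_iff_pairwise, List.pairwise_flatMap]
  refine ⟨fun a _ => (List.sortedLE_replicate _).pairwise,
    (Finset.pairwise_sort _ _).imp fun hab x hx y hy => ?_⟩
  rwa [List.eq_of_mem_replicate hx, List.eq_of_mem_replicate hy]

theorem coe_sigmaPlus (f : ℕ+ →₀ ℕ) : (sigmaPlus f : Multiset ℕ+) = Finsupp.toMultiset f := by
  rw [sigmaPlus_eq_flatMap, ← Multiset.coe_bind, Finset.sort_eq, Finsupp.toMultiset_apply]
  simp only [Multiset.nsmul_singleton, Multiset.coe_replicate]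
  rfl

theorem sigmaAb_sigmaPlus (f : ℕ+ →₀ ℕ) : sigmaAb (sigmaPlus f) = f := by
  rw [sigmaAb_eq_toFinsupp, coe_sigmaPlus, Finsupp.toMultiset_toFinsupp]

theorem sigmaPlus_sigmaAb (m : List ℕ+) : sigmaPlus (sigmaAb m) = m.insertionSort (· ≤ ·) :=
  have hperm : (sigmaPlus (sigmaAb m)).Perm m := sigmaAb_eq_iff_perm.1 (sigmaAb_sigmaPlus _)
  (hperm.trans (m.perm_insertionSort _).symm).eq_of_sortedLE (sortedLE_sigmaPlus _)
    m.sortedLE_insertionSort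

namespace StdTermOrder

variable (T : StdTermOrder)

/-- The reflexive closure of a standard term order, so that `Nle` and `Qle` are by definition the
intersections of these relations. -/
def le (s t : List ℕ+) : Prop := s = t ∨ T.lt s t

instance : IsTrans (List ℕ+) T.le where
  trans := by
    rintro s t u (rfl | hst) (rfl | htu)
    · exact .inl rfl
    · exact .inr htu
    · exact .inr hst
    · exact .inr (T.trans _ _ _ hst htu)

theorem nil_le (t : List ℕ+) : T.le [] t :=
  (eq_or_ne [] t).imp_right fun ht => T.one_lt t ht.symm

variable {T}

theorem le.append {s t : List ℕ+} (h : T.le s t) (a b : List ℕ+) :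
    T.le (a ++ s ++ b) (a ++ t ++ b) :=
  h.imp (congrArg (a ++ · ++ b)) (T.mul_lt a b s t)

theorem le.cons {s t : List ℕ+} (h : T.le s t) (i : ℕ+) : T.le (i :: s) (i :: t) := by
  simpa using h.append [i] []

theorem cons_le_cons_left {i j : ℕ+} (h : i ≤ j) (t : List ℕ+) : T.le (i :: t) (j :: t) := by
  have hij : T.le [i] [j] := h.eq_or_lt.imp (congrArg ([·])) (T.std i j)
  simpa using hij.append [] t

theorem le_of_sublistForall₂ {u v : List ℕ+} (h : List.SublistForall₂ (· ≤ ·) u v) : T.le u v := by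
  induction h with
  | nil => exact T.nil_le _
  | @cons i j u v hij _ ih =>
    calc
      T.le (i :: u) (i :: v) := ih.cons i
      T.le _ (j :: v) := cons_le_cons_left hij v
  | @cons_right i u v _ ih =>
    calc
      T.le u v := ih
      T.le _ (i :: v) := by simpa using (T.nil_le [i]).append [] v

end StdTermOrder

namespace SortedStdTermOrder

variable (T : SortedStdTermOrder)

theorem le_orderedInsert (i : ℕ+) (l : List ℕ+) : T.le (i :: l) (l.orderedInsert (· ≤ ·) i) := by
  induction l with
  | nil => exact .inl rfl
  | cons j l ih =>
    rw [List.orderedInsert_cons]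
    split_ifs with hij
    · exact .inl rfl
    calc
      T.le (i :: j :: l) (j :: i :: l) := .inr (T.sorted [] l j i (not_le.1 hij))
      T.le _ (j :: l.orderedInsert (· ≤ ·) i) := ih.cons j

theorem le_insertionSort (l : List ℕ+) : T.le l (l.insertionSort (· ≤ ·)) := by
  induction l with
  | nil => exact .inl rfl
  | cons i l ih =>
    calc
      T.le (i :: l) (i :: l.insertionSort (· ≤ ·)) := ih.cons i
      T.le _ ((i :: l).insertionSort (· ≤ ·)) := T.le_orderedInsert i _

end SortedStdTermOrder

namespace CStdTermOrder

/-- The sorted standard term order on words induced by a standard term order on `[X]`: words are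
compared by their abelianizations, and words with equal abelianization by the reversed
lexicographic order, which makes sorted words the largest in their class. -/
def toSorted (T : CStdTermOrder) : SortedStdTermOrder where
  lt s t := T.lt (sigmaAb s) (sigmaAb t) ∨ sigmaAb s = sigmaAb t ∧ t < s
  irrefl s := by
    rintro (h | ⟨-, h⟩)
    · exact T.irrefl _ h
    · exact lt_irrefl s h
  trans s t u := by
    rintro (h | ⟨h, hts⟩) (h' | ⟨h', hut⟩)
    · exact .inl (T.trans _ _ _ h h')
    · exact .inl (h' ▸ h)
    · exact .inl (h ▸ h')
    · exact .inr ⟨h.trans h', hut.trans hts⟩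
  total s t hst := by
    by_cases h : sigmaAb s = sigmaAb t
    · exact hst.lt_or_gt.symm.imp (.inr ⟨h, ·⟩) (.inr ⟨h.symm, ·⟩)
    · exact (T.total _ _ h).imp .inl .inl
  one_lt t ht := .inl <| T.one_lt _ fun h => ht (sigmaAb_eq_iff_perm (t := []).1 h).eq_nil
  mul_lt a b s t := by
    simp only [sigmaAb_append, add_right_comm _ _ (sigmaAb b)]
    rintro (h | ⟨h, hts⟩)
    · exact .inl (T.mul_lt _ _ _ h)
    · have hlen : t.length = s.length := (sigmaAb_eq_iff_perm.1 h).length_eq.symm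
      have hlt : a ++ (t ++ b) < a ++ (s ++ b) :=
        List.append_left_lt (append_lt_append_of_length_eq b hlen hts)
      exact .inr ⟨by rw [h], by simpa only [List.append_assoc] using hlt⟩
  std i j hij := .inl <| by simpa [sigmaAb] using T.std i j hij
  sorted t s i j hij :=
    .inr ⟨sigmaAb_eq_iff_perm.2 ((List.Perm.swap i j s).append_left t),
      List.append_left_lt (List.cons_lt_cons_iff.2 (.inl hij))⟩

section Weight

variable {M : Type*} [AddCommMonoid M]

/-- The additive map recording the weight of an exponent vector, followed by the vector itself:
the lexicographic order of its codomain refines the comparison of weights by the colexicographic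
order (the largest index is decisive). -/
noncomputable def weightColex (w : ℕ+ → M) : (ℕ+ →₀ ℕ) →+ M ×ₗ Colex (ℕ+ →₀ ℕ) where
  toFun a := toLex (Finsupp.weight w a, toColex a)
  map_zero' := by rw [map_zero]; rfl
  map_add' a b := by rw [map_add]; rfl

theorem weightColex_injective (w : ℕ+ → M) : Function.Injective (weightColex w) :=
  fun _ _ h => toColex.injective (congrArg Prod.snd (toLex.injective h))

variable [LinearOrder M] {w : ℕ+ → M}

theorem weightColex_lt_weightColex {a b : ℕ+ →₀ ℕ}
    (hle : Finsupp.weight w a ≤ Finsupp.weight w b) (hlt : toColex a < toColex b) :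
    weightColex w a < weightColex w b :=
  Prod.Lex.toLex_strictMono (Prod.mk_lt_mk_of_le_of_lt hle hlt)

/-- The standard term order on `[X]` comparing exponent vectors by weight, ties being broken by the
colexicographic order. -/
noncomputable def ofWeight [IsOrderedCancelAddMonoid M] (hw₀ : 0 ≤ w) (hw : Monotone w) :
    CStdTermOrder where
  lt a b := weightColex w a < weightColex w b
  irrefl _ := lt_irrefl _
  trans _ _ _ := lt_trans
  total _ _ hab := ((weightColex_injective w).ne hab).lt_or_gt
  one_lt t ht := by
    refine weightColex_lt_weightColex ?_ (bot_lt_iff_ne_bot.2 ht)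
    rw [map_zero, Finsupp.weight_apply]
    exact Finset.sum_nonneg fun i _ => nsmul_nonneg (hw₀ i) _
  mul_lt t s s' h := by
    rw [map_add, map_add]
    exact add_lt_add_right h _
  std i j hij := by
    refine weightColex_lt_weightColex ?_ (Finsupp.Colex.single_lt_iff.2 hij)
    simpa [Finsupp.weight_single] using hw hij.le

end Weight

end CStdTermOrder

theorem Cle.weight_le {M : Type*} [AddCommMonoid M] [LinearOrder M] [IsOrderedCancelAddMonoid M]
    {w : ℕ+ → M} (hw₀ : 0 ≤ w) (hw : Monotone w) {a b : ℕ+ →₀ ℕ} (h : Cle a b) :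
    Finsupp.weight w a ≤ Finsupp.weight w b := by
  obtain rfl | h := h (.ofWeight hw₀ hw)
  · exact le_rfl
  · exact Prod.Lex.monotone_fst _ _ h.le

theorem Cle.countP_sigmaPlus_le {a b : ℕ+ →₀ ℕ} (h : Cle a b) (k : ℕ+) :
    (sigmaPlus a).countP (k ≤ ·) ≤ (sigmaPlus b).countP (k ≤ ·) := by
  let w : ℕ+ → ℕ := fun i => if k ≤ i then 1 else 0
  have hw : Monotone w := fun i j hij => by grind
  have hweight : ∀ f, Finsupp.weight w f = (sigmaPlus f).countP (k ≤ ·) := by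
    intro f
    conv_lhs => rw [← sigmaAb_sigmaPlus f, weight_sigmaAb]
    induction sigmaPlus f with
    | nil => rfl
    | cons i l ih => simp [List.countP_cons, w, ih, add_comm]
  simpa only [hweight] using h.weight_le (fun _ => zero_le) hw

theorem Cle.nle_sigmaPlus {a b : ℕ+ →₀ ℕ} (h : Cle a b) : Nle (sigmaPlus a) (sigmaPlus b) :=
  fun _ => StdTermOrder.le_of_sublistForall₂ <|
    sublistForall₂_of_countP_le (sortedLE_sigmaPlus a) (sortedLE_sigmaPlus b) h.countP_sigmaPlus_le

theorem Nle.qle {m m' : List ℕ+} (h : Nle m m') : Qle m m' :=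
  fun T => h T.toStdTermOrder

theorem Qle.cle_sigmaAb {m m' : List ℕ+} (h : Qle m m') : Cle (sigmaAb m) (sigmaAb m') := by
  intro T
  obtain rfl | hlt | ⟨heq, -⟩ := h T.toSorted
  · exact .inl rfl
  · exact .inr hlt
  · exact .inl heq

theorem qle_sigmaPlus_sigmaAb (m : List ℕ+) : Qle m (sigmaPlus (sigmaAb m)) := by
  rw [sigmaPlus_sigmaAb]
  exact fun T => T.le_insertionSort m

/-- `(σ, σ⁺)` is a Galois coconnection between `(X*, Q)` and `([X], 𝔠)`:
both maps are order-preserving, `σ⁺(σ(m)) ≥_Q m` for every word `m`, and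
`σ(σ⁺(w)) ≤_𝔠 w` (indeed `σ(σ⁺(w)) = w`) for every `w ∈ [X]`. -/
theorem stmt17 :
    (∀ m m' : List ℕ+, Qle m m' → Cle (sigmaAb m) (sigmaAb m')) ∧
    (∀ a b : ℕ+ →₀ ℕ, Cle a b → Qle (sigmaPlus a) (sigmaPlus b)) ∧
    (∀ m : List ℕ+, Qle m (sigmaPlus (sigmaAb m))) ∧
    (∀ w : ℕ+ →₀ ℕ, Cle (sigmaAb (sigmaPlus w)) w ∧ sigmaAb (sigmaPlus w) = w) := by
  refine ⟨?_, ?_, qle_sigmaPlus_sigmaAb, ?_⟩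
  · exact fun _ _ h => h.cle_sigmaAb
  · exact fun _ _ h => h.nle_sigmaPlus.qle
  · exact fun w => ⟨fun _ => .inl (sigmaAb_sigmaPlus w), sigmaAb_sigmaPlus w⟩
end
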